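/- Let N ≥ 1 be an integer, P_s > 0, σ_w² > 0 and z ≥ 0 be reals, and define the log-likelihood f(v) = −N · ln(π (v P_s + σ_w²)) − z/(v P_s + σ_w²) for v ≥ 0. Then f attains its maximum over [0, ∞) at v* = max(0, z/(N P_s) − σ_w²/P_s); that is, f(v) ≤ f(v*) for all v ≥ 0. -/

import Mathlib

/-!
In the received variance `s = v P_s + σ_w²` the log-likelihood is `L(s) = -n log (π s) - z / s`.
Since `log x ≥ 1 - 1 / x`, one has `L(s) - L(t) ≥ (t - s) (n s - z) / (t s)` for `s, t > 0`.
The unconstrained maximizer of `L` is `z / n`; its projection `s = max a (z / n)` onto `[a, ∞)`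
satisfies `(t - s) (s - z / n) ≥ 0` for every `t ≥ a`, so it maximizes `L` over `[a, ∞)`.
-/

open Real Set

/-- The logarithm of `(π s)⁻ⁿ exp (-z / s)`, the likelihood of the variance `s > 0` for `n`
independent circular complex Gaussian samples of total energy `z`. The number of samples is allowed
to be real. -/
noncomputable def gaussianLogLikelihood (n z s : ℝ) : ℝ :=
  -n * log (π * s) - z / s

lemma div_le_gaussianLogLikelihood_sub {n s t : ℝ} (z : ℝ) (hn : 0 ≤ n) (hs : 0 < s) (ht : 0 < t) :
    (t - s) * (n * s - z) / (t * s) ≤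
      gaussianLogLikelihood n z s - gaussianLogLikelihood n z t := by
  have one_sub_div_le_log : 1 - s / t ≤ log (t / s) := by
    simpa only [inv_div] using one_sub_inv_le_log_of_pos (div_pos ht hs)
  calc (t - s) * (n * s - z) / (t * s)
    _ = n * (1 - s / t) + (z / t - z / s) := by field_simp; ring
    _ ≤ n * log (t / s) + (z / t - z / s) := by gcongr
    _ = gaussianLogLikelihood n z s - gaussianLogLikelihood n z t := by
      rw [gaussianLogLikelihood, gaussianLogLikelihood, log_mul pi_ne_zero hs.ne',
        log_mul pi_ne_zero ht.ne', log_div ht.ne' hs.ne']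
      ring

lemma sub_max_mul_max_sub_nonneg {R : Type*} [Ring R] [LinearOrder R] [IsOrderedRing R]
    {a t : R} (b : R) (hat : a ≤ t) : 0 ≤ (t - max a b) * (max a b - b) := by
  rcases le_total a b with hab | hba
  · simp [max_eq_right hab]
  · rw [max_eq_left hba]
    exact mul_nonneg (sub_nonneg.2 hat) (sub_nonneg.2 hba)

lemma isMaxOn_gaussianLogLikelihood_Ici {n a : ℝ} (z : ℝ) (hn : 0 < n) (ha : 0 < a) :
    IsMaxOn (gaussianLogLikelihood n z) (Ici a) (max a (z / n)) := by
  intro t (hat : a ≤ t)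
  set s := max a (z / n)
  have hs : 0 < s := lt_max_of_lt_left ha
  have ht : 0 < t := ha.trans_le hat
  have hnum : 0 ≤ (t - s) * (n * s - z) := by
    calc
      0 ≤ n * ((t - s) * (s - z / n)) := mul_nonneg hn.le (sub_max_mul_max_sub_nonneg _ hat)
      _ = (t - s) * (n * s - z) := by field_simp
  exact sub_nonneg.1 <| (div_nonneg hnum (mul_pos ht hs).le).trans <|
    div_le_gaussianLogLikelihood_sub z hn.le hs ht

lemma max_zero_sub_div_mul_add {K : Type*} [Field K] [LinearOrder K] [IsStrictOrderedRing K]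
    {p : K} (hp : 0 < p) (a b : K) : max 0 ((b - a) / p) * p + a = max a b := by
  rw [max_mul_of_nonneg _ _ hp.le, zero_mul, div_mul_cancel₀ _ hp.ne', ← max_add_add_right,
    zero_add, sub_add_cancel]

theorem glrt_ml_estimate_maximizes_general {n Ps σwsq : ℝ} (z : ℝ) (hn : 0 < n) (hPs : 0 < Ps)
    (hσ : 0 < σwsq) :
    IsMaxOn (fun v ↦ gaussianLogLikelihood n z (v * Ps + σwsq)) (Ici 0)
      (max 0 (z / (n * Ps) - σwsq / Ps)) := by
  intro v (hv : 0 ≤ v)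
  have variance_estimate :
      max 0 (z / (n * Ps) - σwsq / Ps) * Ps + σwsq = max σwsq (z / n) := by
    rw [← div_div, ← sub_div, max_zero_sub_div_mul_add hPs]
  have le_variance : σwsq ≤ v * Ps + σwsq := le_add_of_nonneg_left (mul_nonneg hv hPs.le)
  have likelihood_le : gaussianLogLikelihood n z (v * Ps + σwsq) ≤
      gaussianLogLikelihood n z (max σwsq (z / n)) :=
    isMaxOn_gaussianLogLikelihood_Ici z hn hσ le_variance
  rwa [← variance_estimate] at likelihood_le

/-- The GLRT log-likelihood `f(v) = −N ln(π(v P_s + σ_w²)) − z/(v P_s + σ_w²)` attains its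
maximum over `[0, ∞)` at `v* = max(0, z/(N P_s) − σ_w²/P_s)`. -/
theorem glrt_ml_estimate_maximizes (N : ℕ) (hN : 1 ≤ N) (Ps σwsq z : ℝ)
    (hPs : 0 < Ps) (hσ : 0 < σwsq) (hz : 0 ≤ z) :
    ∀ v : ℝ, 0 ≤ v →
      -(N : ℝ) * Real.log (Real.pi * (v * Ps + σwsq)) - z / (v * Ps + σwsq) ≤
      -(N : ℝ) * Real.log (Real.pi * (max 0 (z / (N * Ps) - σwsq / Ps) * Ps + σwsq)) -
        z / (max 0 (z / (N * Ps) - σwsq / Ps) * Ps + σwsq) :=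
  fun _ hv ↦ glrt_ml_estimate_maximizes_general z (Nat.cast_pos.2 hN) hPs hσ hv
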